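/- arXiv:2509.03657 — 2 statements merged into one kernel-verified Lean document; each statement's English description precedes it below -/
import Mathlib

section
/- There is an absolute constant C > 0 such that for every real Z ≥ 2 and every W ∈ (−1/2, 1/2]: |F(W) − ∑_{n ∈ ℤ, |n| ≤ Z} a_n e(nW)| ≤ C·T_Z(W). -/
noncomputable section
open scoped Classical

/-- `e(z) = e^{2πiz}`. -/
def eC (z : ℝ) : ℂ := Complex.exp (2 * Real.pi * Complex.I * (z : ℂ))

/-- The distance from `X` to the nearest integer. -/
def distNearInt (X : ℝ) : ℝ := |X - round X|

/-- `F(W) = e(τW)` on `(η₁/2, η₂/2]` and `0` otherwise. -/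
def FF (η₁ η₂ τ W : ℝ) : ℂ := if η₁ / 2 < W ∧ W ≤ η₂ / 2 then eC (τ * W) else 0

/-- The Fourier coefficient `a_n = ∫_{η₁/2}^{η₂/2} e((τ−n)z) dz`. -/
def aCoeff (η₁ η₂ τ : ℝ) (n : ℤ) : ℂ := ∫ z in (η₁ / 2)..(η₂ / 2), eC ((τ - n) * z)

/-- `T_Z(W) = min { log Z, 1/(Z‖W−η₁/2‖) + 1/(Z‖W−η₂/2‖) }`, interpreted as `log Z`
when one of the distances vanishes. -/
def TZ (η₁ η₂ Z W : ℝ) : ℝ :=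
  if distNearInt (W - η₁ / 2) = 0 ∨ distNearInt (W - η₂ / 2) = 0 then Real.log Z
  else min (Real.log Z)
    (1 / (Z * distNearInt (W - η₁ / 2)) + 1 / (Z * distNearInt (W - η₂ / 2)))

open MeasureTheory Filter Topology

theorem eC_add (x y : ℝ) : eC (x + y) = eC x * eC y := by
  simp only [eC, ← Complex.exp_add]
  push_cast
  ring_nf

theorem norm_eC (x : ℝ) : ‖eC x‖ = 1 := by
  rw [eC, show (2 * Real.pi * Complex.I * (x : ℂ)) = ((2 * Real.pi * x : ℝ) : ℂ) * Complex.I by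
    push_cast; ring]
  exact Complex.norm_exp_ofReal_mul_I _

theorem eC_zero : eC 0 = 1 := by simp [eC]

theorem eC_int (n : ℤ) : eC n = 1 := by
  rw [eC, Complex.exp_eq_one_iff]
  exact ⟨n, by push_cast; ring⟩

theorem eC_natCast_mul (n : ℕ) (x : ℝ) : eC (n * x) = eC x ^ n := by
  rw [eC, eC, ← Complex.exp_nat_mul]
  push_cast
  ring_nf

@[fun_prop]
theorem continuous_eC : Continuous eC := by
  unfold eC
  fun_prop

theorem norm_eC_sub_one (y : ℝ) : ‖eC y - 1‖ = 2 * |Real.sin (Real.pi * y)| := by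
  have h := Complex.norm_exp_I_mul_ofReal_sub_one (2 * Real.pi * y)
  rw [show Complex.I * ((2 * Real.pi * y : ℝ) : ℂ) = 2 * Real.pi * Complex.I * (y : ℂ) by
    push_cast; ring] at h
  rw [eC, h, norm_mul, Real.norm_eq_abs, Real.norm_eq_abs, abs_two]
  ring_nf

theorem norm_eC_sub_one_le (y : ℝ) : ‖eC y - 1‖ ≤ 2 * Real.pi * |y| := by
  have h : |Real.sin (Real.pi * y)| ≤ |Real.pi * y| := Real.abs_sin_le_abs
  rw [abs_mul, abs_of_pos Real.pi_pos] at h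
  rw [norm_eC_sub_one]
  linarith

theorem le_norm_eC_sub_one {d y : ℝ} (h0 : 0 ≤ d) (h1 : d ≤ y) (h2 : d ≤ 1 - y) :
    4 * d ≤ ‖eC y - 1‖ := by
  have hpi := Real.pi_pos
  have key : ∀ t : ℝ, 0 ≤ t → t ≤ 1 / 2 → 2 * t ≤ Real.sin (Real.pi * t) := by
    intro t ht ht'
    have h := Real.mul_le_sin (x := Real.pi * t) (by positivity) (by nlinarith)
    rwa [show 2 / Real.pi * (Real.pi * t) = 2 * t by field_simp] at h
  rw [norm_eC_sub_one]
  have hs : 2 * d ≤ Real.sin (Real.pi * y) := by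
    rcases le_total y (1 / 2) with hy | hy
    · linarith [key y (by linarith) hy]
    · have h := key (1 - y) (by linarith) (by linarith)
      rw [show Real.pi * (1 - y) = Real.pi - Real.pi * y by ring, Real.sin_pi_sub] at h
      linarith
  linarith [le_abs_self (Real.sin (Real.pi * y))]

theorem integral_eC_mul {c : ℝ} (hc : c ≠ 0) (a b : ℝ) :
    ∫ y in a..b, eC (c * y) = (eC (c * b) - eC (c * a)) / (2 * Real.pi * Complex.I * c) := by
  have hne : (2 * Real.pi * Complex.I * c : ℂ) ≠ 0 := by
    simp [Real.pi_ne_zero, hc]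
  have h := integral_exp_mul_complex (a := a) (b := b) hne
  have e : ∀ y : ℝ, eC (c * y) = Complex.exp (2 * Real.pi * Complex.I * c * y) := fun y => by
    rw [eC]; push_cast; ring_nf
  simp only [e]
  exact h

theorem sum_Icc_neg_succ {E : Type*} [AddCommMonoid E] (f : ℤ → E) (N : ℕ) :
    ∑ n ∈ Finset.Icc (-((N + 1 : ℕ) : ℤ)) ((N + 1 : ℕ) : ℤ), f n =
      ∑ n ∈ Finset.Icc (-(N : ℤ)) N, f n + (f (N + 1) + f (-(N + 1))) := by
  have h : Finset.Icc (-((N + 1 : ℕ) : ℤ)) ((N + 1 : ℕ) : ℤ) =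
      insert ((N : ℤ) + 1) (insert (-((N : ℤ) + 1)) (Finset.Icc (-(N : ℤ)) N)) := by
    ext n
    simp only [Finset.mem_Icc, Finset.mem_insert]
    push_cast
    omega
  rw [h, Finset.sum_insert, Finset.sum_insert]
  · rw [← add_assoc, add_comm]
  · simp
  · simp only [Finset.mem_Icc, Finset.mem_insert]
    omega

/-- The Dirichlet kernel `∑_{|n| ≤ N} e(ny)`. -/
def dirichletSum (N : ℕ) (y : ℝ) : ℂ := ∑ n ∈ Finset.Icc (-(N : ℤ)) N, eC (n * y)

@[fun_prop]
theorem continuous_dirichletSum (N : ℕ) : Continuous (dirichletSum N) := by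
  unfold dirichletSum
  fun_prop

theorem eC_sub_one_mul_dirichletSum (N : ℕ) (y : ℝ) :
    (eC y - 1) * dirichletSum N y = eC ((N + 1 : ℝ) * y) - eC ((-N : ℝ) * y) := by
  induction N with
  | zero => simp [dirichletSum, eC_zero]
  | succ N ih =>
    have e1 : eC ((((N + 1 : ℕ) : ℝ) + 1) * y) = eC y * eC ((N + 1 : ℝ) * y) := by
      rw [← eC_add]; push_cast; ring_nf
    have e2 : eC ((-N : ℝ) * y) = eC y * eC ((-((N : ℝ) + 1)) * y) := by
      rw [← eC_add]; ring_nf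
    have h := sum_Icc_neg_succ (fun n : ℤ => eC (n * y)) N
    rw [e2] at ih
    unfold dirichletSum at ih ⊢
    rw [h, mul_add, ih, e1]
    push_cast
    ring

theorem integral_dirichletSum_half (N : ℕ) : ∫ y in (0 : ℝ)..(1 / 2), dirichletSum N y = 1 / 2 := by
  unfold dirichletSum
  rw [intervalIntegral.integral_finsetSum
    (fun n _ => Continuous.intervalIntegrable (by fun_prop) _ _)]
  induction N with
  | zero => simp [eC_zero]
  | succ N ih =>
    rw [sum_Icc_neg_succ (fun n : ℤ => ∫ y in (0 : ℝ)..(1 / 2), eC (n * y)), ih]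
    have hN : (N : ℝ) + 1 ≠ 0 := by positivity
    have h : eC (((N : ℝ) + 1) * (1 / 2)) = eC (-((N : ℝ) + 1) * (1 / 2)) := by
      have h1 := eC_int (N + 1)
      have h2 := eC_add (-((N : ℝ) + 1) * (1 / 2)) ((N : ℝ) + 1)
      push_cast at h1
      rw [h1, mul_one] at h2
      rw [← h2]
      ring_nf
    push_cast
    rw [integral_eC_mul hN, integral_eC_mul (neg_ne_zero.mpr hN), h]
    push_cast
    simp only [mul_zero, mul_neg, div_neg]
    ring

theorem tendsto_intervalIntegral_eC_mul (f : ℝ → ℂ) (a b : ℝ) :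
    Tendsto (fun w : ℝ => ∫ y in a..b, eC (w * y) * f y) (cocompact ℝ) (𝓝 0) := by
  have key : ∀ a b : ℝ,
      Tendsto (fun w : ℝ => ∫ y in Set.Ioc a b, eC (w * y) * f y) (cocompact ℝ) (𝓝 0) := by
    intro a b
    have h := (Real.tendsto_integral_exp_smul_cocompact ((Set.Ioc a b).indicator f)).comp
      (Homeomorph.neg ℝ).isClosedEmbedding.tendsto_cocompact
    refine h.congr fun w => ?_
    rw [← integral_indicator measurableSet_Ioc]
    refine integral_congr_ae (Eventually.of_forall fun y => ?_)
    by_cases hy : y ∈ Set.Ioc a b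
    · simp only [Set.indicator_of_mem hy, Circle.smul_def, Real.fourierChar_apply, smul_eq_mul, eC]
      simp only [Homeomorph.coe_neg]
      push_cast
      ring_nf
    · simp [Set.indicator_of_notMem hy]
  simpa [intervalIntegral] using (key a b).sub (key b a)

theorem tendsto_integral_mul_dirichletSum {f g : ℝ → ℂ} {a b : ℝ}
    (hf : IntervalIntegrable f volume a b)
    (hfg : ∀ y ∈ Set.uIoc a b, g y = f y * (eC y - 1)) :
    Tendsto (fun N : ℕ => ∫ y in a..b, g y * dirichletSum N y) atTop (𝓝 0) := by
  have h1 : Tendsto (fun N : ℕ => (N : ℝ) + 1) atTop (cocompact ℝ) :=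
    (tendsto_natCast_atTop_atTop.atTop_add tendsto_const_nhds).mono_right atTop_le_cocompact
  have h2 : Tendsto (fun N : ℕ => -(N : ℝ)) atTop (cocompact ℝ) :=
    (tendsto_neg_atTop_atBot.comp tendsto_natCast_atTop_atTop).mono_right atBot_le_cocompact
  have h := ((tendsto_intervalIntegral_eC_mul f a b).comp h1).sub
    ((tendsto_intervalIntegral_eC_mul f a b).comp h2)
  rw [sub_zero] at h
  refine h.congr fun N => ?_
  simp only [Function.comp]
  rw [← intervalIntegral.integral_sub (hf.continuousOn_mul (by fun_prop))
    (hf.continuousOn_mul (by fun_prop))]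
  refine intervalIntegral.integral_congr_ae (Eventually.of_forall fun y hy => ?_)
  rw [hfg y hy, mul_assoc, eC_sub_one_mul_dirichletSum]
  ring

/-- The integral from `0` to `v` of `e(-τy)` against the Dirichlet kernel. -/
def twistedDirichletIntegral (N : ℕ) (τ v : ℝ) : ℂ :=
  ∑ n ∈ Finset.Icc (-(N : ℤ)) N, ∫ y in (0 : ℝ)..v, eC ((n - τ) * y)

theorem twistedDirichletIntegral_eq (N : ℕ) (τ v : ℝ) :
    twistedDirichletIntegral N τ v = ∫ y in (0 : ℝ)..v, eC (-τ * y) * dirichletSum N y := by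
  unfold dirichletSum twistedDirichletIntegral
  simp only [Finset.mul_sum, ← eC_add]
  rw [intervalIntegral.integral_finsetSum
    (fun n _ => Continuous.intervalIntegrable (by fun_prop) _ _)]
  refine Finset.sum_congr rfl fun n _ => ?_
  congr 1
  ext y
  ring_nf

theorem twistedDirichletIntegral_neg (N : ℕ) (τ v : ℝ) :
    twistedDirichletIntegral N τ (-v) = -twistedDirichletIntegral N (-τ) v := by
  unfold twistedDirichletIntegral
  rw [← Finset.sum_neg_distrib]
  refine Finset.sum_bij (fun n _ => -n) (fun n hn => ?_) (fun _ _ _ _ h => by simpa using h)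
    (fun n hn => ⟨-n, ?_, by simp⟩) (fun n _ => ?_)
  · simp only [Finset.mem_Icc] at hn ⊢; omega
  · simp only [Finset.mem_Icc] at hn ⊢; omega
  · have h := intervalIntegral.integral_comp_neg (a := 0) (b := v)
      (fun y => eC (((n : ℝ) - τ) * y))
    rw [neg_zero, intervalIntegral.integral_symm 0 (-v)] at h
    rw [eq_neg_iff_add_eq_zero, ← neg_eq_iff_add_eq_zero, ← h]
    congr 1
    ext y
    push_cast
    ring_nf

theorem tendsto_twistedDirichletIntegral {τ v : ℝ} (h0 : 0 < v) (h1 : v < 1) :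
    Tendsto (fun N : ℕ => twistedDirichletIntegral N τ v) atTop (𝓝 (1 / 2)) := by
  have hfi : IntervalIntegrable (fun y => (eC (-τ * y) - 1) / (eC y - 1)) volume 0 v := by
    rw [intervalIntegrable_iff_integrableOn_Ioc_of_le h0.le]
    refine Measure.integrableOn_of_bounded (M := 2 * Real.pi * |τ| / (4 * (1 - v)))
      measure_Ioc_lt_top.ne ?_ ?_
    · refine Measurable.aestronglyMeasurable ?_
      exact Measurable.div (Continuous.measurable (by fun_prop))
        (Continuous.measurable (by fun_prop))
    · refine (ae_restrict_iff' measurableSet_Ioc).mpr (Eventually.of_forall fun y hy => ?_)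
      have hv : 0 < 1 - v := by linarith
      have hlow : 4 * (y * (1 - v)) ≤ ‖eC y - 1‖ :=
        le_norm_eC_sub_one (mul_nonneg hy.1.le hv.le) (by nlinarith [hy.1]) (by nlinarith [hy.2])
      have hup := norm_eC_sub_one_le (-τ * y)
      rw [abs_mul, abs_neg, abs_of_pos hy.1] at hup
      have hpos : 0 < 4 * (y * (1 - v)) := by have := hy.1; positivity
      rw [norm_div, div_le_div_iff₀ (hpos.trans_le hlow) (by positivity)]
      calc _ ≤ 2 * Real.pi * (|τ| * y) * (4 * (1 - v)) := by gcongr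
        _ = 2 * Real.pi * |τ| * (4 * (y * (1 - v))) := by ring
        _ ≤ _ := by gcongr
  have hne : ∀ y, 0 < y → y < 1 → eC y - 1 ≠ 0 := by
    intro y hy hy'
    have := le_norm_eC_sub_one (d := min y (1 - y)) (le_min hy.le (by linarith))
      (min_le_left _ _) (min_le_right _ _)
    have h' : 0 < min y (1 - y) := lt_min hy (by linarith)
    exact norm_pos_iff.mp (by linarith)
  have hmem : ∀ y ∈ Set.uIcc (1 / 2) v, 0 < y ∧ y < 1 := fun y hy =>
    ⟨(lt_min (by norm_num) h0).trans_le hy.1, hy.2.trans_lt (max_lt (by norm_num) h1)⟩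
  have ha := tendsto_integral_mul_dirichletSum (g := fun y => eC (-τ * y) - 1) hfi
    (fun y hy => by
      rw [Set.uIoc_of_le h0.le] at hy
      rw [div_mul_cancel₀ _ (hne y hy.1 (by linarith [hy.2]))])
  have hb := tendsto_integral_mul_dirichletSum (f := fun y => (eC y - 1)⁻¹) (g := fun _ => 1)
    (a := 1 / 2) (b := v)
    (ContinuousOn.intervalIntegrable (ContinuousOn.inv₀ (by fun_prop)
      fun y hy => hne y (hmem y hy).1 (hmem y hy).2))
    (fun y hy => by
      have := hmem y (Set.uIoc_subset_uIcc hy)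
      rw [inv_mul_cancel₀ (hne y this.1 this.2)])
  have h := (ha.add hb).add (tendsto_const_nhds (x := (1 / 2 : ℂ)))
  rw [zero_add, zero_add] at h
  refine h.congr fun N => ?_
  rw [twistedDirichletIntegral_eq, ← integral_dirichletSum_half N, add_assoc,
    add_comm (∫ y in (1 / 2 : ℝ)..v, 1 * dirichletSum N y)]
  simp only [one_mul]
  rw [intervalIntegral.integral_add_adjacent_intervals
    (Continuous.intervalIntegrable (by fun_prop) _ _)
    (Continuous.intervalIntegrable (by fun_prop) _ _),
    ← intervalIntegral.integral_add (Continuous.intervalIntegrable (by fun_prop) _ _)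
    (Continuous.intervalIntegrable (by fun_prop) _ _)]
  congr 1
  ext y
  ring

theorem norm_one_sub_mul_sum_le {c : ℕ → ℝ} (hc : Antitone c) (h0 : ∀ k, 0 ≤ c k) {z : ℂ}
    (hz : ‖z‖ = 1) (m : ℕ) :
    ‖(1 - z) * ∑ k ∈ Finset.range m, (c k : ℂ) * z ^ k‖ ≤ 2 * c 0 := by
  have key : ‖(1 - z) * ∑ k ∈ Finset.range m, (c k : ℂ) * z ^ k + c m * z ^ m‖ ≤
      2 * c 0 - c m := by
    induction m with
    | zero => simp [abs_of_nonneg (h0 0)]; linarith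
    | succ m ih =>
      have e : (1 - z) * ∑ k ∈ Finset.range (m + 1), (c k : ℂ) * z ^ k + c (m + 1) * z ^ (m + 1) =
          ((1 - z) * ∑ k ∈ Finset.range m, (c k : ℂ) * z ^ k + c m * z ^ m) -
            ((c m - c (m + 1) : ℝ) : ℂ) * z ^ (m + 1) := by
        rw [Finset.sum_range_succ]; push_cast; ring
      rw [e]
      refine (norm_sub_le _ _).trans ?_
      rw [norm_mul, norm_pow, hz, one_pow, mul_one, Complex.norm_real,
        Real.norm_of_nonneg (by linarith [hc (Nat.le_succ m)])]
      linarith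
  have h := norm_sub_le ((1 - z) * ∑ k ∈ Finset.range m, (c k : ℂ) * z ^ k + c m * z ^ m)
    (c m * z ^ m)
  rw [add_sub_cancel_right, norm_mul (c m : ℂ), norm_pow, hz, one_pow, mul_one, Complex.norm_real,
    Real.norm_of_nonneg (h0 m)] at h
  linarith

theorem twistedDirichletIntegral_add (N m : ℕ) {τ : ℝ} (hτ : |τ| ≤ 1 / 2) (v : ℝ) :
    2 * Real.pi * Complex.I *
        (twistedDirichletIntegral (N + m) τ v - twistedDirichletIntegral N τ v) =
      eC (-τ * v) *
          (eC ((N + 1 : ℝ) * v) *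
              ∑ k ∈ Finset.range m, ((1 / (N + 1 + k - τ) : ℝ) : ℂ) * eC v ^ k -
            eC (-(N + 1 : ℝ) * v) *
              ∑ k ∈ Finset.range m, ((1 / (N + 1 + k + τ) : ℝ) : ℂ) * eC (-v) ^ k) -
        ((∑ k ∈ Finset.range m, (1 / (N + 1 + k - τ) - 1 / (N + 1 + k + τ)) : ℝ) : ℂ) := by
  induction m with
  | zero => simp
  | succ m ih =>
    have hle := abs_le.mp hτ
    have hm : (0 : ℝ) ≤ m := m.cast_nonneg
    have hN : (0 : ℝ) ≤ N := N.cast_nonneg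
    have h1 : (N : ℝ) + 1 + m - τ ≠ 0 := by linarith
    have h2 : (N : ℝ) + 1 + m + τ ≠ 0 := by linarith
    have h2' : -((N : ℝ) + 1 + m + τ) ≠ 0 := neg_ne_zero.mpr h2
    have h1C : (N : ℂ) + 1 + m - τ ≠ 0 := by exact_mod_cast h1
    have h2C : (N : ℂ) + 1 + m + τ ≠ 0 := by exact_mod_cast h2
    have e1 : eC (((N : ℝ) + 1 + m - τ) * v) =
        eC (-τ * v) * (eC ((N + 1 : ℝ) * v) * eC v ^ m) := by
      rw [← eC_natCast_mul, ← eC_add, ← eC_add]; ring_nf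
    have e2 : eC (-((N : ℝ) + 1 + m + τ) * v) =
        eC (-τ * v) * (eC (-(N + 1 : ℝ) * v) * eC (-v) ^ m) := by
      rw [← eC_natCast_mul, ← eC_add, ← eC_add]; ring_nf
    have h : twistedDirichletIntegral (N + (m + 1)) τ v = twistedDirichletIntegral (N + m) τ v +
        ((eC (((N : ℝ) + 1 + m - τ) * v) - 1) / (2 * Real.pi * Complex.I * (N + 1 + m - τ)) +
          (eC (-((N : ℝ) + 1 + m + τ) * v) - 1) /
            (2 * Real.pi * Complex.I * -(N + 1 + m + τ))) := by
      unfold twistedDirichletIntegral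
      rw [← add_assoc, sum_Icc_neg_succ (fun n : ℤ => ∫ y in (0 : ℝ)..v, eC ((n - τ) * y))]
      have i1 := integral_eC_mul h1 0 v
      have i2 := integral_eC_mul h2' 0 v
      rw [mul_zero, eC_zero] at i1 i2
      push_cast at i1 i2 ⊢
      rw [← i1, ← i2]
      congr 3 <;> ext y <;> ring_nf
    rw [h, add_sub_right_comm, mul_add, ih, e1, e2]
    simp only [Finset.sum_range_succ]
    push_cast
    field_simp
    ring

theorem abs_sum_inv_sub_le {τ : ℝ} (hτ : |τ| ≤ 1 / 2) (N m : ℕ) :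
    |∑ k ∈ Finset.range m, (1 / ((N : ℝ) + 1 + k - τ) - 1 / (N + 1 + k + τ))| ≤
      1 / (N + 1 / 2) := by
  have hle := abs_le.mp hτ
  have key : |∑ k ∈ Finset.range m, (1 / ((N : ℝ) + 1 + k - τ) - 1 / (N + 1 + k + τ))| ≤
      1 / (N + 1 / 2) - 1 / (N + m + 1 / 2) := by
    induction m with
    | zero => simp
    | succ m ih =>
      rw [Finset.sum_range_succ]
      refine (abs_add_le _ _).trans ?_
      have hx : (1 : ℝ) ≤ (N : ℝ) + 1 + m := by
        have := N.cast_nonneg (α := ℝ); have := m.cast_nonneg (α := ℝ); linarith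
      have hstep : |1 / ((N : ℝ) + 1 + m - τ) - 1 / (N + 1 + m + τ)| ≤
          1 / (N + m + 1 / 2) - 1 / (N + (m + 1 : ℕ) + 1 / 2) := by
        push_cast
        rw [show (N : ℝ) + m + 1 / 2 = (N + 1 + m) - 1 / 2 by ring,
          show (N : ℝ) + (m + 1) + 1 / 2 = (N + 1 + m) + 1 / 2 by ring]
        generalize (N : ℝ) + 1 + m = x at hx
        have a1 : 0 < x - τ := by linarith
        have a2 : 0 < x + τ := by linarith
        have a3 : 0 < x - 1 / 2 := by linarith
        have a4 : 0 < x + 1 / 2 := by linarith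
        rw [div_sub_div _ _ a1.ne' a2.ne', div_sub_div _ _ a3.ne' a4.ne', abs_div,
          abs_of_pos (mul_pos a1 a2)]
        have hn : |1 * (x + τ) - (x - τ) * 1| ≤ 1 := by
          rw [abs_le]; constructor <;> linarith
        refine div_le_div₀ (by norm_num) (by linarith) (mul_pos a3 a4) ?_
        nlinarith
      linarith
  have : (0 : ℝ) ≤ 1 / (N + m + 1 / 2) := by positivity
  linarith

theorem norm_twistedDirichletIntegral_sub_half_le {τ v d : ℝ} (hτ : |τ| ≤ 1 / 2) (hd : 0 < d)
    (h0 : d ≤ v) (h1 : d ≤ 1 - v) (N : ℕ) :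
    ‖twistedDirichletIntegral N τ v - 1 / 2‖ ≤ 1 / ((N + 1) * d) := by
  have hle := abs_le.mp hτ
  have hN0 : (0 : ℝ) ≤ N := N.cast_nonneg
  have abel : ∀ σ w : ℝ, |σ| ≤ 1 / 2 → 4 * d ≤ ‖eC w - 1‖ → ∀ m : ℕ,
      ‖∑ k ∈ Finset.range m, ((1 / (N + 1 + k + σ) : ℝ) : ℂ) * eC w ^ k‖ ≤ 1 / ((N + 1) * d) := by
    intro σ w hσ hw m
    have hσ' := abs_le.mp hσ
    have hpos : ∀ k : ℕ, 0 < (N : ℝ) + 1 + k + σ := fun k => by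
      have := k.cast_nonneg (α := ℝ); linarith
    have h := norm_one_sub_mul_sum_le (c := fun k : ℕ => 1 / ((N : ℝ) + 1 + k + σ))
      (fun i j hij => by
        have : (i : ℝ) ≤ j := by exact_mod_cast hij
        exact one_div_le_one_div_of_le (hpos i) (by linarith))
      (fun k => by have := hpos k; positivity) (norm_eC w) m
    rw [norm_mul, norm_sub_rev] at h
    have hc : 1 / ((N : ℝ) + 1 + (0 : ℕ) + σ) ≤ 2 / (N + 1) := by
      have := hpos 0
      rw [div_le_div_iff₀ this (by positivity)]
      push_cast
      linarith
    rw [le_div_iff₀ (by positivity)]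
    have h' := (mul_le_mul_of_nonneg_right hw (norm_nonneg
      (∑ k ∈ Finset.range m, ((1 / (N + 1 + k + σ) : ℝ) : ℂ) * eC w ^ k))).trans
      (h.trans (mul_le_mul_of_nonneg_left hc zero_le_two))
    rw [← mul_div_assoc, le_div_iff₀ (by positivity)] at h'
    linarith
  have hz := le_norm_eC_sub_one hd.le h0 h1
  have hz' : 4 * d ≤ ‖eC (-v) - 1‖ := by
    rwa [norm_eC_sub_one, mul_neg, Real.sin_neg, abs_neg, ← norm_eC_sub_one]
  have hB : (0 : ℝ) < 1 / ((N + 1) * d) := by positivity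
  have hdiff : ∀ m : ℕ,
      ‖twistedDirichletIntegral (N + m) τ v - twistedDirichletIntegral N τ v‖ ≤
        1 / ((N + 1) * d) := by
    intro m
    have h := congrArg norm (twistedDirichletIntegral_add N m hτ v)
    have hA := abel (-τ) v (by rwa [abs_neg]) hz m
    have hA' := abel τ (-v) hτ hz' m
    simp only [← sub_eq_add_neg] at hA
    have hT := abs_sum_inv_sub_le hτ N m
    have hT' : 1 / ((N : ℝ) + 1 / 2) ≤ 1 / ((N + 1) * d) :=
      one_div_le_one_div_of_le (by positivity) (by nlinarith)
    rw [norm_mul, show ‖(2 * Real.pi * Complex.I : ℂ)‖ = 2 * Real.pi by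
      simp [abs_of_pos Real.pi_pos]] at h
    have h3 : 2 * Real.pi *
        ‖twistedDirichletIntegral (N + m) τ v - twistedDirichletIntegral N τ v‖ ≤
        3 * (1 / ((N + 1) * d)) := by
      rw [h]
      refine (norm_sub_le _ _).trans ?_
      rw [norm_mul, norm_eC, one_mul, Complex.norm_real, Real.norm_eq_abs]
      have h4 := norm_sub_le
        (eC ((N + 1 : ℝ) * v) * ∑ k ∈ Finset.range m, ((1 / (N + 1 + k - τ) : ℝ) : ℂ) * eC v ^ k)
        (eC (-(N + 1 : ℝ) * v) *
          ∑ k ∈ Finset.range m, ((1 / (N + 1 + k + τ) : ℝ) : ℂ) * eC (-v) ^ k)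
      rw [norm_mul (eC _), norm_mul (eC _), norm_eC, norm_eC, one_mul, one_mul] at h4
      linarith
    nlinarith [Real.pi_gt_three, norm_nonneg
      (twistedDirichletIntegral (N + m) τ v - twistedDirichletIntegral N τ v)]
  have hlim := ((tendsto_twistedDirichletIntegral (τ := τ) (v := v) (by linarith)
    (by linarith)).comp (tendsto_add_atTop_nat N)).sub_const (twistedDirichletIntegral N τ v)
  rw [norm_sub_rev]
  refine le_of_tendsto hlim.norm (Eventually.of_forall fun m => ?_)
  simp only [Function.comp, add_comm m N]
  exact hdiff m

/-- `±1/2` according to the sign of `v`. -/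
def halfSign (v : ℝ) : ℂ := if 0 < v then 1 / 2 else -(1 / 2)

theorem distNearInt_le (x : ℝ) (n : ℤ) : distNearInt x ≤ |x - n| := round_le x n

theorem norm_halfSign_sub_twistedDirichletIntegral_le {τ v : ℝ} (hτ : |τ| ≤ 1 / 2)
    (hd : distNearInt v ≠ 0) (h0 : -1 ≤ v) (h1 : v ≤ 1) (N : ℕ) :
    ‖halfSign v - twistedDirichletIntegral N τ v‖ ≤ 1 / ((N + 1) * distNearInt v) := by
  have hpos : 0 < distNearInt v := lt_of_le_of_ne (abs_nonneg _) hd.symm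
  have d0 := distNearInt_le v 0
  rw [Int.cast_zero, sub_zero] at d0
  unfold halfSign
  split_ifs with hv
  · have d1 := distNearInt_le v 1
    rw [abs_of_pos hv] at d0
    rw [Int.cast_one, abs_of_nonpos (by linarith)] at d1
    rw [norm_sub_rev]
    exact norm_twistedDirichletIntegral_sub_half_le hτ hpos d0 (by linarith) N
  · have d1 := distNearInt_le v (-1)
    rw [abs_of_nonpos (by linarith)] at d0
    rw [abs_of_nonneg (by push_cast; linarith)] at d1
    push_cast at d1
    have h := norm_twistedDirichletIntegral_sub_half_le (τ := -τ) (by rwa [abs_neg]) hpos d0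
      (by linarith) N
    have e := twistedDirichletIntegral_neg N τ (-v)
    rw [neg_neg] at e
    rw [e]
    convert h using 2
    ring

theorem sum_aCoeff_mul_eC (η₁ η₂ τ W : ℝ) (N : ℕ) :
    ∑ n ∈ Finset.Icc (-(N : ℤ)) N, aCoeff η₁ η₂ τ n * eC ((n : ℝ) * W) =
      eC (τ * W) * (twistedDirichletIntegral N τ (W - η₁ / 2) -
        twistedDirichletIntegral N τ (W - η₂ / 2)) := by
  unfold twistedDirichletIntegral
  rw [← Finset.sum_sub_distrib, Finset.mul_sum]
  refine Finset.sum_congr rfl fun n _ => ?_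
  rw [intervalIntegral.integral_interval_sub_left
    (Continuous.intervalIntegrable (by fun_prop) _ _)
    (Continuous.intervalIntegrable (by fun_prop) _ _),
    ← intervalIntegral.integral_comp_sub_left (fun y => eC (((n : ℝ) - τ) * y)), aCoeff,
    ← intervalIntegral.integral_mul_const, ← intervalIntegral.integral_const_mul]
  congr 1
  ext z
  rw [← eC_add, ← eC_add]
  ring_nf

theorem norm_aCoeff_le {η₁ η₂ τ : ℝ} (hτ : |τ| ≤ 1 / 2) {n : ℤ} {k : ℕ}
    (hn : |(n : ℝ)| = k + 1) : ‖aCoeff η₁ η₂ τ n‖ ≤ ((k : ℝ) + 1)⁻¹ := by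
  have hlow : ((k : ℝ) + 1) / 2 ≤ |τ - n| := by
    have h := abs_sub_abs_le_abs_sub (n : ℝ) τ
    rw [abs_sub_comm] at h
    have := k.cast_nonneg (α := ℝ)
    linarith
  have hk : (0 : ℝ) < (k + 1) / 2 := by positivity
  have hne : τ - n ≠ 0 := abs_pos.mp (hk.trans_le hlow)
  rw [aCoeff, integral_eC_mul hne, norm_div]
  have h2 := norm_sub_le (eC ((τ - n) * (η₂ / 2))) (eC ((τ - n) * (η₁ / 2)))
  rw [norm_eC, norm_eC] at h2
  have hden : ‖(2 * Real.pi * Complex.I * ((τ - n : ℝ) : ℂ) : ℂ)‖ = 2 * Real.pi * |τ - n| := by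
    simp only [norm_mul, Complex.norm_I, Complex.norm_real, Complex.norm_ofNat, Real.norm_eq_abs,
      abs_of_pos Real.pi_pos, mul_one]
  rw [hden, inv_eq_one_div, div_le_div_iff₀ (by have := hk.trans_le hlow; positivity)
    (by positivity)]
  nlinarith [Real.pi_gt_three]

theorem sum_norm_aCoeff_le {η₁ η₂ τ : ℝ} (h1 : -1 ≤ η₁) (h12 : η₁ < η₂) (h2 : η₂ ≤ 1)
    (hτ : |τ| ≤ 1 / 2) (N : ℕ) :
    ∑ n ∈ Finset.Icc (-(N : ℤ)) N, ‖aCoeff η₁ η₂ τ n‖ ≤ 1 + 2 * (harmonic N : ℝ) := by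
  induction N with
  | zero =>
    have h := intervalIntegral.norm_integral_le_of_norm_le_const (a := η₁ / 2) (b := η₂ / 2)
      (f := fun z => eC ((τ - (0 : ℤ)) * z)) (C := 1) (fun z _ => (norm_eC _).le)
    rw [abs_of_pos (by linarith)] at h
    simp only [CharP.cast_eq_zero, neg_zero, Finset.Icc_self, Finset.sum_singleton, harmonic_zero,
      Rat.cast_zero, mul_zero, add_zero]
    exact h.trans (by linarith)
  | succ N ih =>
    have ha := norm_aCoeff_le (η₁ := η₁) (η₂ := η₂) hτ (n := (N : ℤ) + 1) (k := N)
      (by push_cast; exact abs_of_pos (by positivity))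
    have hb := norm_aCoeff_le (η₁ := η₁) (η₂ := η₂) hτ (n := -((N : ℤ) + 1)) (k := N)
      (by push_cast; rw [abs_neg]; exact abs_of_pos (by positivity))
    rw [sum_Icc_neg_succ (fun n : ℤ => ‖aCoeff η₁ η₂ τ n‖), harmonic_succ]
    push_cast
    linarith

theorem tsum_abs_le_eq_sum_Icc {Z : ℝ} (hZ : 0 ≤ Z) (f : ℤ → ℂ) :
    ∑' n : {n : ℤ // (|n| : ℝ) ≤ Z}, f n =
      ∑ n ∈ Finset.Icc (-(⌊Z⌋₊ : ℤ)) ⌊Z⌋₊, f n := by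
  rw [← Finset.tsum_subtype]
  refine Equiv.tsum_eq (Equiv.subtypeEquivRight fun n => ?_)
    (fun n : {n // n ∈ Finset.Icc (-(⌊Z⌋₊ : ℤ)) ⌊Z⌋₊} => f n)
  rw [Finset.mem_Icc, ← abs_le, ← Int.natCast_natAbs, Nat.cast_le, Nat.le_floor_iff hZ,
    Nat.cast_natAbs, Int.cast_abs]

theorem FF_eq_halfSign {η₁ η₂ τ W : ℝ} (h12 : η₁ < η₂) :
    FF η₁ η₂ τ W = eC (τ * W) * (halfSign (W - η₁ / 2) - halfSign (W - η₂ / 2)) := by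
  unfold FF halfSign
  simp only [sub_pos]
  by_cases ha : η₁ / 2 < W <;> by_cases hb : η₂ / 2 < W
  · simp [ha, hb, not_le.mpr hb]
  · rw [if_pos ⟨ha, not_lt.mp hb⟩, if_pos ha, if_neg hb]
    norm_num
  · linarith
  · simp [ha, hb]

theorem norm_FF_sub_sum_le_log {η₁ η₂ τ : ℝ} (h1 : -1 ≤ η₁) (h12 : η₁ < η₂) (h2 : η₂ ≤ 1)
    (hτ : |τ| ≤ 1 / 2) {Z : ℝ} (hZ : 2 ≤ Z) (W : ℝ) :
    ‖FF η₁ η₂ τ W - ∑ n ∈ Finset.Icc (-(⌊Z⌋₊ : ℤ)) ⌊Z⌋₊, aCoeff η₁ η₂ τ n * eC ((n : ℝ) * W)‖ ≤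
      8 * Real.log Z := by
  have hF : ‖FF η₁ η₂ τ W‖ ≤ 1 := by
    unfold FF
    split_ifs
    · exact (norm_eC _).le
    · simp
  have hS : ‖∑ n ∈ Finset.Icc (-(⌊Z⌋₊ : ℤ)) ⌊Z⌋₊, aCoeff η₁ η₂ τ n * eC ((n : ℝ) * W)‖ ≤
      1 + 2 * (harmonic ⌊Z⌋₊ : ℝ) := by
    refine (norm_sum_le _ _).trans ?_
    simp only [norm_mul, norm_eC, mul_one]
    exact sum_norm_aCoeff_le h1 h12 h2 hτ _
  have hfl : (0 : ℝ) < ⌊Z⌋₊ := by exact_mod_cast Nat.floor_pos.mpr (by linarith)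
  have hlog := Real.log_le_log hfl (Nat.floor_le (by linarith : 0 ≤ Z))
  have hlog2 := Real.log_le_log two_pos hZ
  have := harmonic_le_one_add_log ⌊Z⌋₊
  have := Real.log_two_gt_d9
  have := norm_sub_le (FF η₁ η₂ τ W)
    (∑ n ∈ Finset.Icc (-(⌊Z⌋₊ : ℤ)) ⌊Z⌋₊, aCoeff η₁ η₂ τ n * eC ((n : ℝ) * W))
  linarith

theorem norm_FF_sub_sum_le_inv {η₁ η₂ τ W : ℝ} (h1 : -1 ≤ η₁) (h12 : η₁ < η₂) (h2 : η₂ ≤ 1)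
    (hτ : |τ| ≤ 1 / 2) {Z : ℝ} (hZ : 0 < Z) (hW : |W| ≤ 1 / 2)
    (hd₁ : distNearInt (W - η₁ / 2) ≠ 0) (hd₂ : distNearInt (W - η₂ / 2) ≠ 0) :
    ‖FF η₁ η₂ τ W - ∑ n ∈ Finset.Icc (-(⌊Z⌋₊ : ℤ)) ⌊Z⌋₊, aCoeff η₁ η₂ τ n * eC ((n : ℝ) * W)‖ ≤
      1 / (Z * distNearInt (W - η₁ / 2)) + 1 / (Z * distNearInt (W - η₂ / 2)) := by
  have hW' := abs_le.mp hW
  have hfl := (Nat.lt_floor_add_one Z).le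
  have bound : ∀ v, distNearInt v ≠ 0 → -1 ≤ v → v ≤ 1 →
      ‖halfSign v - twistedDirichletIntegral ⌊Z⌋₊ τ v‖ ≤ 1 / (Z * distNearInt v) := by
    intro v hd hv0 hv1
    have hpos : 0 < distNearInt v := lt_of_le_of_ne (abs_nonneg _) hd.symm
    refine (norm_halfSign_sub_twistedDirichletIntegral_le hτ hd hv0 hv1 _).trans ?_
    gcongr
  rw [FF_eq_halfSign h12, sum_aCoeff_mul_eC, ← mul_sub, norm_mul, norm_eC, one_mul,
    sub_sub_sub_comm]
  exact (norm_sub_le _ _).trans (add_le_add (bound _ hd₁ (by linarith) (by linarith))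
    (bound _ hd₂ (by linarith) (by linarith)))

/-- (Truncated Fourier expansion of the sector indicator.) -/
theorem statement8 :
    ∃ C : ℝ, 0 < C ∧ ∀ η₁ η₂ τ Z W : ℝ,
      -1 ≤ η₁ → η₁ < η₂ → η₂ ≤ 1 → -(1 / 2) < τ → τ ≤ 1 / 2 → 2 ≤ Z →
      -(1 / 2) < W → W ≤ 1 / 2 →
      ‖FF η₁ η₂ τ W -
          ∑' n : {n : ℤ // (|n| : ℝ) ≤ Z}, aCoeff η₁ η₂ τ n * eC ((n : ℝ) * W)‖ ≤
        C * TZ η₁ η₂ Z W := by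
  refine ⟨8, by norm_num, fun η₁ η₂ τ Z W h1 h12 h2 hτ hτ' hZ hW hW' => ?_⟩
  have hτa : |τ| ≤ 1 / 2 := abs_le.mpr ⟨by linarith, hτ'⟩
  rw [tsum_abs_le_eq_sum_Icc (by linarith) (fun n => aCoeff η₁ η₂ τ n * eC ((n : ℝ) * W))]
  have hlog := norm_FF_sub_sum_le_log h1 h12 h2 hτa hZ W
  unfold TZ
  split_ifs with hd
  · exact hlog
  · push Not at hd
    rw [mul_min_of_nonneg _ _ (by norm_num)]
    refine le_min hlog ?_
    have h := norm_FF_sub_sum_le_inv h1 h12 h2 hτa (Z := Z) (by linarith) (abs_le.mpr ⟨hW.le, hW'⟩)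
      hd.1 hd.2
    linarith [(norm_nonneg _).trans h]

end
end

section
/- Assume d ≡ 2 or 3 (mod 4) and fix reals −1 ≤ η₁ < η₂ ≤ 1. For every δ > 0 there exists a constant C > 0, depending only on K, η₁, η₂ and δ, such that for all reals x ≥ 2 and Z ≥ 2: ∑_{s ∈ S(−1,1;x)} T_Z(W(s)) ≤ C·x^{1/2+δ}·(log Z + x·log x / Z). -/
open NumberField Ideal

noncomputable section
open scoped Classical

/-- The absolute norm of an element of `𝒪_K`. -/
def elemNorm (K : Type) [Field K] [NumberField K] (a : 𝓞 K) : ℕ :=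
  Ideal.absNorm (Ideal.span {a})

/-- Membership in the sector `S(η₁,η₂)`, where `e = σ₁(ε)`. -/
def InSector (K : Type) [Field K] [NumberField K] (σ₁ σ₂ : K →+* ℝ) (e η₁ η₂ : ℝ)
    (a : 𝓞 K) : Prop :=
  e ^ η₁ * |σ₂ (a : K)| < |σ₁ (a : K)| ∧ |σ₁ (a : K)| ≤ e ^ η₂ * |σ₂ (a : K)| ∧ 0 < σ₁ (a : K)

/-- `W(s) = log|σ₁(s)/σ₂(s)| / (2 log ε)`, with `e = σ₁(ε)`. -/
def Wfun (K : Type) [Field K] [NumberField K] (σ₁ σ₂ : K →+* ℝ) (e : ℝ) (s : 𝓞 K) : ℝ :=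
  Real.log |σ₁ (s : K) / σ₂ (s : K)| / (2 * Real.log e)

/-- One summand of `TZ`, as a function of the signed distance. -/
def kernelZ (Z y : ℝ) : ℝ := if y = 0 then Real.log Z else min (Real.log Z) (1 / (Z * |y|))

lemma kernelZ_nonneg {Z : ℝ} (hZ : 2 ≤ Z) (y : ℝ) : 0 ≤ kernelZ Z y := by
  have h := Real.log_nonneg (by linarith : (1 : ℝ) ≤ Z)
  unfold kernelZ
  split_ifs
  · exact h
  · exact le_min h (by positivity)

lemma kernelZ_le_log (Z y : ℝ) : kernelZ Z y ≤ Real.log Z := by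
  unfold kernelZ
  split_ifs
  · exact le_rfl
  · exact min_le_left _ _

lemma kernelZ_le_of_le_abs {Z y c : ℝ} (hZ : 2 ≤ Z) (hc : 0 < c) (h : c ≤ |y|) :
    kernelZ Z y ≤ 1 / (Z * c) := by
  have hy : y ≠ 0 := abs_pos.mp (hc.trans_le h)
  unfold kernelZ
  rw [if_neg hy]
  refine (min_le_right _ _).trans ?_
  gcongr

lemma TZ_le_log (η₁ η₂ Z W : ℝ) : TZ η₁ η₂ Z W ≤ Real.log Z := by
  unfold TZ
  split_ifs
  · exact le_rfl
  · exact min_le_left _ _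

lemma TZ_le_kernelZ_add {Z : ℝ} (hZ : 2 ≤ Z) (η₁ η₂ W : ℝ) :
    TZ η₁ η₂ Z W ≤ kernelZ Z (W - η₁ / 2 - round (W - η₁ / 2)) +
      kernelZ Z (W - η₂ / 2 - round (W - η₂ / 2)) := by
  have hl := Real.log_nonneg (by linarith : (1 : ℝ) ≤ Z)
  unfold TZ kernelZ distNearInt
  simp only [abs_eq_zero]
  generalize W - η₁ / 2 - round (W - η₁ / 2) = y₁
  generalize W - η₂ / 2 - round (W - η₂ / 2) = y₂
  have h1 : 0 ≤ 1 / (Z * |y₁|) := by positivity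
  have h2 : 0 ≤ 1 / (Z * |y₂|) := by positivity
  by_cases a1 : y₁ = 0 <;> by_cases a2 : y₂ = 0 <;> simp only [a1, a2, true_or, or_true, or_self,
    if_true, if_false]
  · linarith
  · have := le_min hl h2
    linarith
  · have := le_min hl h1
    linarith
  · rcases min_cases (Real.log Z) (1 / (Z * |y₁|)) with ⟨e1, _⟩ | ⟨e1, _⟩ <;>
    rcases min_cases (Real.log Z) (1 / (Z * |y₂|)) with ⟨e2, _⟩ | ⟨e2, _⟩ <;>
    rw [e1, e2]
    · exact (min_le_left _ _).trans (by linarith)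
    · exact (min_le_left _ _).trans (by linarith)
    · exact (min_le_left _ _).trans (by linarith)
    · exact min_le_right _ _

lemma kernelZ_sub_round_le {Z X : ℝ} (hZ : 2 ≤ Z) (hX : |X| ≤ 1) :
    kernelZ Z (X - round X) ≤ ∑ m ∈ Finset.Icc (-1 : ℤ) 1, kernelZ Z (X - m) := by
  refine Finset.single_le_sum (f := fun m : ℤ => kernelZ Z (X - m))
    (fun m _ => kernelZ_nonneg hZ _) ?_
  have h := abs_le.mp (abs_sub_round X)
  have h' := abs_le.mp hX
  have h1 : (-2 : ℝ) < (round X : ℤ) := by linarith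
  have h2 : ((round X : ℤ) : ℝ) < 2 := by linarith
  have h1' : (-2 : ℤ) < round X := by exact_mod_cast h1
  have h2' : round X < 2 := by exact_mod_cast h2
  rw [Finset.mem_Icc]
  omega

lemma sum_inv_abs_le {ι : Type*} (F : Finset ι) (a : ι → ℤ) (hinj : Set.InjOn a F) (i₀ : ι)
    (hi₀ : i₀ ∈ F) (N : ℕ) (hN : ∀ i ∈ F, |a i - a i₀| ≤ N) :
    ∑ i ∈ F.erase i₀, (1 : ℝ) / |(a i : ℝ) - a i₀| ≤ 2 * (1 + Real.log N) := by
  have hH : ∑ k ∈ Finset.Icc 1 N, (1 : ℝ) / k ≤ 1 + Real.log N := by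
    have := harmonic_le_one_add_log N
    rw [harmonic_eq_sum_Icc] at this
    push_cast at this
    simpa only [one_div] using this
  have hmaps : ∀ i ∈ F.erase i₀, (a i - a i₀).natAbs ∈ Finset.Icc 1 N := by
    intro i hi
    rw [Finset.mem_erase] at hi
    have h1 : a i ≠ a i₀ := fun h => hi.1 (hinj hi.2 hi₀ h)
    have h2 := abs_le.mp (hN i hi.2)
    rw [Finset.mem_Icc]
    omega
  rw [← Finset.sum_fiberwise_of_maps_to hmaps]
  calc _ ≤ ∑ k ∈ Finset.Icc 1 N, 2 * ((1 : ℝ) / k) := by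
        refine Finset.sum_le_sum fun k _ => ?_
        have hc : ((F.erase i₀).filter fun i => (a i - a i₀).natAbs = k).card ≤ 2 := by
          refine (Finset.card_le_card_of_injOn (t := {a i₀ + k, a i₀ - k}) a ?_ ?_).trans
            Finset.card_le_two
          · intro i hi
            simp only [Finset.coe_filter, Set.mem_ofPred_eq] at hi
            simp only [Finset.coe_insert, Finset.coe_singleton, Set.mem_insert_iff,
              Set.mem_singleton_iff]
            omega
          · refine hinj.mono fun i hi => ?_
            simp only [Finset.coe_filter, Set.mem_ofPred_eq, Finset.mem_erase] at hi
            exact hi.1.2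
        calc _ = ∑ i ∈ (F.erase i₀).filter fun i => (a i - a i₀).natAbs = k, (1 : ℝ) / k := by
              refine Finset.sum_congr rfl fun i hi => ?_
              rw [← (Finset.mem_filter.mp hi).2, Nat.cast_natAbs]
              push_cast
              rfl
          _ ≤ _ := by
              rw [Finset.sum_const, nsmul_eq_mul]
              gcongr
              exact_mod_cast hc
    _ = 2 * ∑ k ∈ Finset.Icc 1 N, (1 : ℝ) / k := by rw [Finset.mul_sum]
    _ ≤ _ := by linarith

/-- A sum of `kernelZ` over well-spaced points is dominated by the point nearest to `t`. -/
lemma sum_kernelZ_le_of_spaced {ι : Type*} (F : Finset ι) (a : ι → ℤ) (w : ι → ℝ)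
    (hinj : Set.InjOn a F) {t h Z : ℝ} (hZ : 2 ≤ Z) (hh : 0 < h) (N : ℕ)
    (hsp : ∀ i ∈ F, ∀ j ∈ F, h * |(a i : ℝ) - a j| ≤ |w i - w j|)
    (hN : ∀ i ∈ F, ∀ j ∈ F, |a i - a j| ≤ N) :
    ∑ i ∈ F, kernelZ Z (w i - t) ≤ Real.log Z + 4 / (Z * h) * (1 + Real.log N) := by
  have hl := Real.log_nonneg (by linarith : (1 : ℝ) ≤ Z)
  have hlN := Real.log_natCast_nonneg N
  rcases F.eq_empty_or_nonempty with rfl | hne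
  · rw [Finset.sum_empty]
    positivity
  obtain ⟨i₀, hi₀, hmin⟩ := F.exists_min_image (fun i => |w i - t|) hne
  rw [← Finset.add_sum_erase F _ hi₀]
  refine add_le_add (kernelZ_le_log _ _) ?_
  calc _ ≤ ∑ i ∈ F.erase i₀, 2 / (Z * h) * ((1 : ℝ) / |(a i : ℝ) - a i₀|) := by
        refine Finset.sum_le_sum fun i hi => ?_
        rw [Finset.mem_erase] at hi
        have hai : 0 < |(a i : ℝ) - a i₀| := by
          rw [abs_pos, sub_ne_zero]
          exact_mod_cast fun h => hi.1 (hinj hi.2 hi₀ h)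
        have h1 := hsp i hi.2 i₀ hi₀
        have h2 := hmin i hi.2
        have h3 : |w i - w i₀| ≤ |w i - t| + |w i₀ - t| := by
          rw [abs_sub_comm (w i₀) t]
          exact abs_sub_le _ _ _
        have h4 : h * |(a i : ℝ) - a i₀| / 2 ≤ |w i - t| := by linarith
        refine (kernelZ_le_of_le_abs hZ (by positivity) h4).trans (le_of_eq ?_)
        field_simp
    _ = 2 / (Z * h) * ∑ i ∈ F.erase i₀, (1 : ℝ) / |(a i : ℝ) - a i₀| := by rw [Finset.mul_sum]
    _ ≤ 2 / (Z * h) * (2 * (1 + Real.log N)) := by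
        gcongr
        exact sum_inv_abs_le F a hinj i₀ hi₀ N fun i hi => hN i hi i₀ hi₀
    _ = _ := by ring

lemma abs_sub_div_le_abs_log_sub {A B Y : ℝ} (hA : 0 < A) (hB : 0 < B) (hAY : A ≤ Y)
    (hBY : B ≤ Y) : |A - B| / Y ≤ |Real.log A - Real.log B| := by
  wlog hAB : B ≤ A generalizing A B
  · rw [abs_sub_comm, abs_sub_comm (Real.log A)]
    exact this hB hA hBY hAY (le_of_not_ge hAB)
  have h1 : Real.log (B / A) ≤ B / A - 1 := Real.log_le_sub_one_of_pos (by positivity)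
  rw [Real.log_div hB.ne' hA.ne'] at h1
  rw [abs_of_nonneg (sub_nonneg.mpr hAB)]
  calc (A - B) / Y ≤ (A - B) / A := div_le_div_of_nonneg_left (by linarith) hA hAY
    _ = 1 - B / A := by rw [sub_div, div_self hA.ne']
    _ ≤ Real.log A - Real.log B := by linarith
    _ ≤ _ := le_abs_self _

lemma elemNorm_eq_abs_mul (K : Type) [Field K] [NumberField K]
    (hdeg : Module.finrank ℚ K = 2) (σ₁ σ₂ : K →+* ℝ) (hσ : σ₁ ≠ σ₂) (s : 𝓞 K) :
    (elemNorm K s : ℝ) = |σ₁ (s : K)| * |σ₂ (s : K)| := by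
  set τ₁ : K →+* ℂ := Complex.ofRealHom.comp σ₁ with hτ₁
  set τ₂ : K →+* ℂ := Complex.ofRealHom.comp σ₂ with hτ₂
  have hne : τ₁ ≠ τ₂ := by
    intro h
    refine hσ (RingHom.ext fun x => ?_)
    have := RingHom.congr_fun h x
    simpa [hτ₁, hτ₂] using this
  have huniv : (Finset.univ : Finset (K →+* ℂ)) = {τ₁, τ₂} := by
    refine (Finset.eq_of_subset_of_card_le (Finset.subset_univ _) ?_).symm
    rw [Finset.card_pair hne, Finset.card_univ, NumberField.Embeddings.card, hdeg]
  have h1 : (algebraMap ℚ ℂ) (Algebra.norm ℚ (s : K)) = τ₁ (s : K) * τ₂ (s : K) := by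
    rw [Algebra.norm_eq_prod_embeddings,
      ← Fintype.prod_equiv (RingHom.equivRatAlgHom K ℂ) (fun f => f (s : K))
        (fun φ => φ (s : K)) fun _ => by simp [RingHom.equivRatAlgHom_apply],
      huniv, Finset.prod_pair hne]
  have h2 : ((Algebra.norm ℤ s : ℤ) : ℝ) = σ₁ (s : K) * σ₂ (s : K) := by
    rw [← Algebra.coe_norm_int s] at h1
    have h3 : (((Algebra.norm ℤ s : ℤ) : ℝ) : ℂ) = ((σ₁ (s : K) * σ₂ (s : K) : ℝ) : ℂ) := by
      simpa [hτ₁, hτ₂] using h1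
    exact_mod_cast h3
  rw [elemNorm, Ideal.absNorm_span_singleton, Nat.cast_natAbs, Int.cast_abs, h2, abs_mul]

lemma exists_integral_coordinates (K : Type) [Field K] [NumberField K]
    (hdeg : Module.finrank ℚ K = 2) (σ₁ σ₂ : K →+* ℝ) (hσ : σ₁ ≠ σ₂) :
    ∃ (a b : 𝓞 K → ℤ) (p₁ p₂ q₁ q₂ : ℝ), p₁ * q₂ - p₂ * q₁ ≠ 0 ∧
      (∀ s t : 𝓞 K, a s = a t → b s = b t → s = t) ∧
      ∀ s : 𝓞 K, σ₁ (s : K) = a s * p₁ + b s * p₂ ∧ σ₂ (s : K) = a s * q₁ + b s * q₂ := by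
  let B := Module.finBasisOfFinrankEq ℤ (𝓞 K) ((NumberField.RingOfIntegers.rank K).trans hdeg)
  have hrep : ∀ s : 𝓞 K, (s : K) = (B.repr s 0 : K) * (B 0 : K) + (B.repr s 1 : K) * (B 1 : K) := by
    intro s
    have h := congrArg (algebraMap (𝓞 K) K) (B.sum_repr s)
    rw [Fin.sum_univ_two] at h
    refine h.symm.trans ?_
    simp
  have hcoord : ∀ (σ : K →+* ℝ) (s : 𝓞 K), σ (s : K) =
      B.repr s 0 * σ (B 0 : K) + B.repr s 1 * σ (B 1 : K) := by
    intro σ s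
    conv_lhs => rw [hrep s]
    simp
  refine ⟨fun s => B.repr s 0, fun s => B.repr s 1, σ₁ (B 0 : K), σ₁ (B 1 : K), σ₂ (B 0 : K),
    σ₂ (B 1 : K), ?_, ?_, fun s => ⟨hcoord σ₁ s, hcoord σ₂ s⟩⟩
  · intro hΔ
    have hlin : ∀ s : 𝓞 K, σ₂ (B 0 : K) * σ₁ (s : K) = σ₁ (B 0 : K) * σ₂ (s : K) := by
      intro s
      rw [hcoord σ₁ s, hcoord σ₂ s]
      linear_combination -(B.repr s 1 : ℝ) * hΔ
    have h0 : σ₂ (B 0 : K) = σ₁ (B 0 : K) := by simpa using hlin 1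
    have hB0 : σ₁ (B 0 : K) ≠ 0 := by
      rw [map_ne_zero]
      exact_mod_cast B.ne_zero 0
    refine hσ (IsLocalization.ringHom_ext (nonZeroDivisors (𝓞 K)) (RingHom.ext fun s => ?_))
    have := hlin s
    rw [h0] at this
    exact mul_left_cancel₀ hB0 this
  · intro s t h0 h1
    refine B.repr.injective (Finsupp.ext fun i => ?_)
    fin_cases i
    · exact h0
    · exact h1

/-- Sum of `kernelZ` over lattice points of a sector lying on one line `b = const ≠ 0`, with
`σ₂` of constant sign; here `P`, `Q` are the two embeddings. -/
lemma sum_kernelZ_fiber_le {ι : Type*} (F : Finset ι) (a : ι → ℤ) (b : ℤ) (hb : b ≠ 0)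
    (P Q : ι → ℝ) {p₁ p₂ q₁ q₂ E Y L Z t : ℝ} (hΔ : p₁ * q₂ - p₂ * q₁ ≠ 0) (hE : E = 1 ∨ E = -1)
    (hinj : Set.InjOn a F) (hPa : ∀ i ∈ F, P i = a i * p₁ + b * p₂)
    (hQa : ∀ i ∈ F, Q i = a i * q₁ + b * q₂) (hP : ∀ i ∈ F, 0 < P i) (hQ : ∀ i ∈ F, 0 < E * Q i)
    (hPY : ∀ i ∈ F, P i ^ 2 ≤ Y) (hQY : ∀ i ∈ F, Q i ^ 2 ≤ Y) (hY : 0 < Y) (hL : 0 < L)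
    (hZ : 2 ≤ Z) (N : ℕ) (hN : ∀ i ∈ F, ∀ j ∈ F, |a i - a j| ≤ N) :
    ∑ i ∈ F, kernelZ Z (Real.log |P i / Q i| / L - t) ≤
      Real.log Z + 4 / (Z * (|p₁ * q₂ - p₂ * q₁| / (Y * L))) * (1 + Real.log N) := by
  have hΔ' := abs_pos.mpr hΔ
  have hE2 : E * E = 1 := by rcases hE with rfl | rfl <;> norm_num
  have hEabs : |E| = 1 := by rcases hE with rfl | rfl <;> norm_num
  have hlog : ∀ i ∈ F, Real.log |P i / Q i| = Real.log (P i) - Real.log (E * Q i) := by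
    intro i hi
    have h : Real.log (E * Q i) = Real.log (Q i) := by
      rw [← Real.log_abs, abs_mul, hEabs, one_mul, Real.log_abs]
    have hQ0 : Q i ≠ 0 := right_ne_zero_of_mul (hQ i hi).ne'
    rw [h, Real.log_abs, Real.log_div (hP i hi).ne' hQ0]
  refine sum_kernelZ_le_of_spaced F a (fun i => Real.log |P i / Q i| / L) hinj hZ (by positivity)
    N (fun i hi j hj => ?_) hN
  have hpos : ∀ i ∈ F, ∀ j ∈ F, 0 < P i * (E * Q j) ∧ P i * (E * Q j) ≤ Y := by
    intro i hi j hj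
    refine ⟨mul_pos (hP i hi) (hQ j hj), ?_⟩
    have h1 := hPY i hi
    have h2 := hQY j hj
    have h3 : (E * Q j) ^ 2 = Q j ^ 2 := by rw [mul_pow, pow_two E, hE2, one_mul]
    nlinarith [sq_nonneg (P i - E * Q j)]
  have key := abs_sub_div_le_abs_log_sub (hpos i hi j hj).1 (hpos j hj i hi).1
    (hpos i hi j hj).2 (hpos j hj i hi).2
  rw [Real.log_mul (hP i hi).ne' (hQ j hj).ne', Real.log_mul (hP j hj).ne' (hQ i hi).ne'] at key
  have hcross : P i * (E * Q j) - P j * (E * Q i) =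
      E * (b * ((p₁ * q₂ - p₂ * q₁) * ((a i : ℝ) - a j))) := by
    rw [hPa i hi, hPa j hj, hQa i hi, hQa j hj]
    ring
  rw [hcross, abs_mul, hEabs, one_mul, abs_mul, abs_mul] at key
  have hb1 : (1 : ℝ) ≤ |(b : ℝ)| := by exact_mod_cast Int.one_le_abs hb
  rw [← sub_div, abs_div, abs_of_pos hL, hlog i hi, hlog j hj, le_div_iff₀ hL]
  calc _ = 1 * (|p₁ * q₂ - p₂ * q₁| * |(a i : ℝ) - a j|) / Y := by field_simp
    _ ≤ |(b : ℝ)| * (|p₁ * q₂ - p₂ * q₁| * |(a i : ℝ) - a j|) / Y := by gcongr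
    _ ≤ _ := key
    _ = _ := by
      congr 1
      ring

lemma sum_TZ_fiber_le {ι : Type*} (F : Finset ι) (a : ι → ℤ) (b : ℤ) (hb : b ≠ 0)
    (P Q : ι → ℝ) {p₁ p₂ q₁ q₂ Y L Z η₁ η₂ : ℝ} (hΔ : p₁ * q₂ - p₂ * q₁ ≠ 0)
    (hη₁ : |η₁| ≤ 1) (hη₂ : |η₂| ≤ 1)
    (hinj : Set.InjOn a F) (hPa : ∀ i ∈ F, P i = a i * p₁ + b * p₂)
    (hQa : ∀ i ∈ F, Q i = a i * q₁ + b * q₂) (hP : ∀ i ∈ F, 0 < P i) (hQ : ∀ i ∈ F, Q i ≠ 0)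
    (hPY : ∀ i ∈ F, P i ^ 2 ≤ Y) (hQY : ∀ i ∈ F, Q i ^ 2 ≤ Y) (hY : 0 < Y) (hL : 0 < L)
    (hW : ∀ i ∈ F, |Real.log |P i / Q i| / L| ≤ 1 / 2)
    (hZ : 2 ≤ Z) (N : ℕ) (hN : ∀ i ∈ F, ∀ j ∈ F, |a i - a j| ≤ N) :
    ∑ i ∈ F, TZ η₁ η₂ Z (Real.log |P i / Q i| / L) ≤
      12 * (Real.log Z + 4 / (Z * (|p₁ * q₂ - p₂ * q₁| / (Y * L))) * (1 + Real.log N)) := by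
  set R := Real.log Z + 4 / (Z * (|p₁ * q₂ - p₂ * q₁| / (Y * L))) * (1 + Real.log N)
  have hone : ∀ t, ∑ i ∈ F, kernelZ Z (Real.log |P i / Q i| / L - t) ≤ 2 * R := by
    intro t
    rw [← Finset.sum_filter_add_sum_filter_not F (fun i => 0 < Q i), two_mul]
    refine add_le_add ?_ ?_
    · have hF : ∀ i ∈ F.filter (fun i => 0 < Q i), i ∈ F := fun i hi => (Finset.mem_filter.mp hi).1
      refine sum_kernelZ_fiber_le _ a b hb P Q (E := 1) hΔ (Or.inl rfl) (hinj.mono hF)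
        (fun i hi => hPa i (hF i hi)) (fun i hi => hQa i (hF i hi)) (fun i hi => hP i (hF i hi))
        (fun i hi => ?_) (fun i hi => hPY i (hF i hi)) (fun i hi => hQY i (hF i hi)) hY hL hZ N
        (fun i hi j hj => hN i (hF i hi) j (hF j hj))
      rw [one_mul]
      exact (Finset.mem_filter.mp hi).2
    · have hF : ∀ i ∈ F.filter (fun i => ¬ 0 < Q i), i ∈ F :=
        fun i hi => (Finset.mem_filter.mp hi).1
      refine sum_kernelZ_fiber_le _ a b hb P Q (E := -1) hΔ (Or.inr rfl) (hinj.mono hF)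
        (fun i hi => hPa i (hF i hi)) (fun i hi => hQa i (hF i hi)) (fun i hi => hP i (hF i hi))
        (fun i hi => ?_) (fun i hi => hPY i (hF i hi)) (fun i hi => hQY i (hF i hi)) hY hL hZ N
        (fun i hi j hj => hN i (hF i hi) j (hF j hj))
      have h1 := not_lt.mp (Finset.mem_filter.mp hi).2
      have h2 := lt_of_le_of_ne h1 (hQ i (hF i hi))
      linarith
  have heta : ∀ η : ℝ, |η| ≤ 1 → ∑ i ∈ F, kernelZ Z (Real.log |P i / Q i| / L - η / 2 -
      round (Real.log |P i / Q i| / L - η / 2)) ≤ 6 * R := by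
    intro η hη
    calc _ ≤ ∑ i ∈ F, ∑ m ∈ Finset.Icc (-1 : ℤ) 1,
          kernelZ Z (Real.log |P i / Q i| / L - η / 2 - m) := by
          refine Finset.sum_le_sum fun i hi => kernelZ_sub_round_le hZ ?_
          have h1 := abs_le.mp (hW i hi)
          have h2 := abs_le.mp hη
          rw [abs_le]
          constructor <;> linarith
      _ = ∑ m ∈ Finset.Icc (-1 : ℤ) 1, ∑ i ∈ F,
          kernelZ Z (Real.log |P i / Q i| / L - (η / 2 + m)) := by
          rw [Finset.sum_comm]
          simp only [sub_sub]
      _ ≤ ∑ _m ∈ Finset.Icc (-1 : ℤ) 1, 2 * R := Finset.sum_le_sum fun m _ => hone _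
      _ = 6 * R := by
          have hcard : (Finset.Icc (-1 : ℤ) 1).card = 3 := rfl
          rw [Finset.sum_const, hcard, nsmul_eq_mul]
          push_cast
          ring
  calc _ ≤ ∑ i ∈ F, (kernelZ Z (Real.log |P i / Q i| / L - η₁ / 2 -
        round (Real.log |P i / Q i| / L - η₁ / 2)) + kernelZ Z (Real.log |P i / Q i| / L - η₂ / 2 -
        round (Real.log |P i / Q i| / L - η₂ / 2))) :=
        Finset.sum_le_sum fun i _ => TZ_le_kernelZ_add hZ _ _ _
    _ ≤ 12 * R := by
        rw [Finset.sum_add_distrib]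
        linarith [heta η₁ hη₁, heta η₂ hη₂]

/-- Size of the embeddings of an element of the sector `S(-1,1)` of bounded norm. -/
lemma sector_bounds {e P Q x : ℝ} (he : 1 < e) (h1 : e ^ (-1 : ℝ) * |Q| < |P|)
    (h2 : |P| ≤ e ^ (1 : ℝ) * |Q|) (hP : 0 < P) (hx : |P| * |Q| ≤ x) :
    Q ≠ 0 ∧ P ^ 2 ≤ e * x ∧ Q ^ 2 ≤ e * x ∧ |Real.log |P / Q| / (2 * Real.log e)| ≤ 1 / 2 := by
  have he0 : 0 < e := by linarith
  have hle : 0 < Real.log e := Real.log_pos he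
  rw [Real.rpow_neg_one, inv_mul_lt_iff₀ he0] at h1
  rw [Real.rpow_one] at h2
  rw [abs_of_pos hP] at h1 h2 hx
  have hQ' : 0 < |Q| := by
    by_contra h
    have : |Q| = 0 := le_antisymm (not_lt.mp h) (abs_nonneg _)
    rw [this] at h2
    linarith
  have hQ : Q ≠ 0 := abs_pos.mp hQ'
  refine ⟨hQ, by nlinarith, by rw [← sq_abs]; nlinarith, ?_⟩
  have h3 := Real.log_le_log hP h2
  rw [Real.log_mul he0.ne' hQ'.ne', Real.log_abs] at h3
  have h4 := Real.log_le_log hQ' h1.le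
  rw [Real.log_mul he0.ne' hP.ne', Real.log_abs] at h4
  rw [Real.log_abs, Real.log_div hP.ne' hQ, abs_div, abs_of_pos (by positivity : 0 < 2 * Real.log e),
    div_le_iff₀ (by positivity), abs_le]
  constructor <;> linarith

lemma abs_coordinate_le {u v P Q k B Δ c : ℝ} (hΔ : Δ ≠ 0) (hP : P ^ 2 ≤ B ^ 2) (hQ : Q ^ 2 ≤ B ^ 2)
    (hB : 0 ≤ B) (h : k * Δ = P * u - Q * v) (hc : (|u| + |v|) / |Δ| ≤ c) : |k| ≤ c * B := by
  have hΔ' := abs_pos.mpr hΔ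
  have hP' := abs_le_of_sq_le_sq hP hB
  have hQ' := abs_le_of_sq_le_sq hQ hB
  have h1 : |k| * |Δ| ≤ B * |u| + B * |v| := by
    rw [← abs_mul, h]
    refine (abs_sub _ _).trans ?_
    rw [abs_mul, abs_mul]
    gcongr
  calc |k| ≤ (B * |u| + B * |v|) / |Δ| := (le_div_iff₀ hΔ').mpr h1
    _ = (|u| + |v|) / |Δ| * B := by ring
    _ ≤ c * B := by gcongr

/-- (Estimate for `Σ = ∑_{s ∈ S(-1,1;x)} T_Z(W(s))`.) -/
theorem statement17
    (K : Type) [Field K] [NumberField K]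
    (d : ℤ) (hd1 : 1 < d) (hdsf : Squarefree d) (hd4 : d % 4 = 2 ∨ d % 4 = 3)
    (hdeg : Module.finrank ℚ K = 2) (hθ : ∃ θ : K, θ ^ 2 = (d : K))
    (σ₁ σ₂ : K →+* ℝ) (hσ : σ₁ ≠ σ₂)
    (hcl : NumberField.classNumber K = 1)
    (ε : (𝓞 K)ˣ) (hε1 : 1 < σ₁ ((ε : 𝓞 K) : K))
    (hεfund : ∀ u : (𝓞 K)ˣ, ∃ n : ℤ, u = ε ^ n ∨ u = -ε ^ n)
    (η₁ η₂ : ℝ) (hη₁ : -1 ≤ η₁) (hη₁₂ : η₁ < η₂) (hη₂ : η₂ ≤ 1)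
    (δ : ℝ) (hδ : 0 < δ) :
    ∃ C : ℝ, 0 < C ∧ ∀ x Z : ℝ, 2 ≤ x → 2 ≤ Z →
      (∑' s : {s : 𝓞 K // InSector K σ₁ σ₂ (σ₁ ((ε : 𝓞 K) : K)) (-1) 1 s ∧
          (elemNorm K s : ℝ) ≤ x},
        TZ η₁ η₂ Z (Wfun K σ₁ σ₂ (σ₁ ((ε : 𝓞 K) : K)) s)) ≤
      C * x ^ ((1 : ℝ) / 2 + δ) * (Real.log Z + x * Real.log x / Z) := by
  set e : ℝ := σ₁ ((ε : 𝓞 K) : K) with he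
  obtain ⟨a, b, p₁, p₂, q₁, q₂, hΔ, hinj, hPQ⟩ := exists_integral_coordinates K hdeg σ₁ σ₂ hσ
  set Δ := p₁ * q₂ - p₂ * q₁ with hΔdef
  have hΔ' := abs_pos.mpr hΔ
  have he0 : 0 < e := by linarith
  have hle : 0 < Real.log e := Real.log_pos hε1
  have hse : 1 ≤ √e := Real.one_le_sqrt.mpr hε1.le
  set c : ℝ := 1 + (|p₁| + |p₂| + |q₁| + |q₂|) / |Δ| with hc
  have hc1 : 1 ≤ c := by rw [hc]; linarith [show 0 ≤ (|p₁| + |p₂| + |q₁| + |q₂|) / |Δ| by positivity]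
  have hl4 : 0 ≤ Real.log (4 * c * √e) := Real.log_nonneg (by nlinarith)
  have hl2 : 0 < Real.log 2 := Real.log_pos one_lt_two
  set G : ℝ := (1 + Real.log (4 * c * √e)) / Real.log 2 + 1 with hG
  have hG0 : 0 ≤ G := by positivity
  set D : ℝ := 1 + 8 * e * Real.log e * G / |Δ| with hD
  have hD1 : 0 ≤ 8 * e * Real.log e * G / |Δ| := by positivity
  refine ⟨65 * c * √e * D, by positivity, fun x Z hx hZ => ?_⟩
  have hx0 : 0 < x := by linarith
  have hlZ := Real.log_nonneg (by linarith : (1 : ℝ) ≤ Z)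
  have hlx2 := Real.log_le_log two_pos hx
  have hlx : 0 < Real.log x := hl2.trans_le hlx2
  have hsx : 1 ≤ √x := Real.one_le_sqrt.mpr (by linarith)
  set B : ℝ := √e * √x with hB
  have hB1 : 1 ≤ B := one_le_mul_of_one_le_of_one_le hse hsx
  have hBsq : B ^ 2 = e * x := by rw [hB, mul_pow, Real.sq_sqrt he0.le, Real.sq_sqrt hx0.le]
  set M : ℕ := ⌈c * B⌉₊ with hM
  have hcB : 1 ≤ c * B := one_le_mul_of_one_le_of_one_le hc1 hB1
  have hM1 : c * B ≤ M := Nat.le_ceil _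
  have hM2 : (M : ℝ) ≤ 2 * (c * B) := by
    linarith [Nat.ceil_lt_add_one (by linarith : 0 ≤ c * B)]
  have hMpos : (0 : ℝ) < M := by linarith
  set R := Real.log Z + 4 / (Z * (|Δ| / (e * x * (2 * Real.log e)))) *
    (1 + Real.log ((2 * M : ℕ) : ℝ)) with hR
  have hlN : 1 + Real.log ((2 * M : ℕ) : ℝ) ≤ G * Real.log x := by
    have h1 : Real.log ((2 * M : ℕ) : ℝ) ≤ Real.log (4 * c * √e) + Real.log x / 2 := by
      rw [← Real.log_sqrt hx0.le, ← Real.log_mul (by positivity) (by positivity)]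
      refine Real.log_le_log (by push_cast; positivity) ?_
      push_cast
      rw [hB] at hM2
      linarith
    have h2 : 1 + Real.log (4 * c * √e) ≤
        (1 + Real.log (4 * c * √e)) / Real.log 2 * Real.log x := by
      rw [div_mul_eq_mul_div, le_div_iff₀ hl2]
      gcongr
    rw [hG, add_mul]
    linarith
  have hlN0 : 0 ≤ Real.log ((2 * M : ℕ) : ℝ) := Real.log_natCast_nonneg _
  have hRZ : Real.log Z ≤ R := by
    rw [hR]
    linarith [show 0 ≤ 4 / (Z * (|Δ| / (e * x * (2 * Real.log e)))) *
      (1 + Real.log ((2 * M : ℕ) : ℝ)) by positivity]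
  have hRD : R ≤ D * (Real.log Z + x * Real.log x / Z) := by
    calc R ≤ Real.log Z + 4 / (Z * (|Δ| / (e * x * (2 * Real.log e)))) * (G * Real.log x) := by
          rw [hR]
          gcongr
      _ = 1 * Real.log Z + (8 * e * Real.log e * G / |Δ|) * (x * Real.log x / Z) := by
          field_simp
          ring
      _ ≤ D * Real.log Z + D * (x * Real.log x / Z) := by
          gcongr <;> rw [hD] <;> linarith
      _ = _ := by ring
  have hE0 : 0 ≤ Real.log Z + x * Real.log x / Z := by positivity
  refine tsum_le_of_sum_le' (by positivity) fun T => ?_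
  have hbd : ∀ s : {s : 𝓞 K // InSector K σ₁ σ₂ e (-1) 1 s ∧ (elemNorm K s : ℝ) ≤ x},
      σ₂ (s.1 : K) ≠ 0 ∧ σ₁ (s.1 : K) ^ 2 ≤ e * x ∧ σ₂ (s.1 : K) ^ 2 ≤ e * x ∧
        |Real.log |σ₁ (s.1 : K) / σ₂ (s.1 : K)| / (2 * Real.log e)| ≤ 1 / 2 := by
    rintro ⟨s, ⟨h1, h2, h3⟩, h4⟩
    rw [elemNorm_eq_abs_mul K hdeg σ₁ σ₂ hσ] at h4
    exact sector_bounds hε1 h1 h2 h3 h4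
  have hcoef : ∀ u v : ℝ, |u| + |v| ≤ |p₁| + |p₂| + |q₁| + |q₂| → (|u| + |v|) / |Δ| ≤ c := by
    intro u v huv
    rw [hc]
    have : (|u| + |v|) / |Δ| ≤ (|p₁| + |p₂| + |q₁| + |q₂|) / |Δ| := by gcongr
    linarith
  have hmem : ∀ k : ℤ, |(k : ℝ)| ≤ c * B → k ∈ Finset.Icc (-M : ℤ) M := by
    intro k hk
    have h1 : |(k : ℝ)| ≤ M := hk.trans hM1
    have h2 : |k| ≤ (M : ℤ) := by exact_mod_cast h1
    exact Finset.mem_Icc.mpr (abs_le.mp h2)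
  have haM : ∀ s : {s : 𝓞 K // InSector K σ₁ σ₂ e (-1) 1 s ∧ (elemNorm K s : ℝ) ≤ x},
      a s ∈ Finset.Icc (-M : ℤ) M := by
    intro s
    obtain ⟨-, h1, h2, -⟩ := hbd s
    refine hmem _ (abs_coordinate_le (u := q₂) (v := p₂) hΔ (hBsq ▸ h1) (hBsq ▸ h2)
      (by linarith) ?_ (hcoef _ _ ?_))
    · rw [(hPQ s).1, (hPQ s).2]
      ring
    · linarith [abs_nonneg p₁, abs_nonneg q₁]
  have hbM : ∀ s : {s : 𝓞 K // InSector K σ₁ σ₂ e (-1) 1 s ∧ (elemNorm K s : ℝ) ≤ x},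
      b s ∈ Finset.Icc (-M : ℤ) M := by
    intro s
    obtain ⟨-, h1, h2, -⟩ := hbd s
    refine hmem _ (abs_coordinate_le (u := -q₁) (v := -p₁) hΔ (hBsq ▸ h1) (hBsq ▸ h2)
      (by linarith) ?_ (hcoef _ _ ?_))
    · rw [(hPQ s).1, (hPQ s).2]
      ring
    · rw [abs_neg, abs_neg]
      linarith [abs_nonneg p₂, abs_nonneg q₂]
  have hcard : (Finset.Icc (-M : ℤ) M).card = 2 * M + 1 := by
    rw [Int.card_Icc]
    omega
  rw [← Finset.sum_fiberwise_of_maps_to (g := fun s => b s.1) fun s _ => hbM s]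
  have hfib_inj : ∀ k : ℤ, Set.InjOn (fun s : {s : 𝓞 K // InSector K σ₁ σ₂ e (-1) 1 s ∧
      (elemNorm K s : ℝ) ≤ x} => a s.1) (T.filter fun s => b s.1 = k) := by
    intro k s hs t ht hst
    have h1 := (Finset.mem_filter.mp (Finset.mem_coe.mp hs)).2
    have h2 := (Finset.mem_filter.mp (Finset.mem_coe.mp ht)).2
    exact Subtype.ext (hinj _ _ hst (h1.trans h2.symm))
  have hfiber : ∀ k ∈ Finset.Icc (-M : ℤ) M, ∑ s ∈ T.filter (fun s => b s.1 = k),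
      TZ η₁ η₂ Z (Wfun K σ₁ σ₂ e s) ≤
        12 * R + if k = 0 then ((2 * M + 1 : ℕ) : ℝ) * Real.log Z else 0 := by
    intro k _
    split_ifs with hk
    · have h1 : (T.filter (fun s => b s.1 = k)).card ≤ 2 * M + 1 := by
        rw [← hcard]
        exact Finset.card_le_card_of_injOn _ (fun s _ => haM s) (hfib_inj k)
      calc _ ≤ ∑ s ∈ T.filter (fun s => b s.1 = k), Real.log Z :=
            Finset.sum_le_sum fun s _ => TZ_le_log _ _ _ _
        _ ≤ ((2 * M + 1 : ℕ) : ℝ) * Real.log Z := by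
            rw [Finset.sum_const, nsmul_eq_mul]
            gcongr
        _ ≤ _ := by linarith
    · rw [add_zero]
      refine sum_TZ_fiber_le _ (fun s => a s.1) k hk (fun s => σ₁ (s.1 : K))
        (fun s => σ₂ (s.1 : K)) hΔ
        (abs_le.mpr ⟨hη₁, by linarith⟩) (abs_le.mpr ⟨by linarith, hη₂⟩) (hfib_inj k)
        (fun s hs => ?_) (fun s hs => ?_) (fun s _ => s.2.1.2.2) (fun s _ => (hbd s).1)
        (fun s _ => (hbd s).2.1) (fun s _ => (hbd s).2.2.1) (by positivity) (by positivity)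
        (fun s _ => (hbd s).2.2.2) hZ (2 * M) (fun s _ t _ => ?_)
      · rw [← (Finset.mem_filter.mp hs).2]
        exact (hPQ s.1).1
      · rw [← (Finset.mem_filter.mp hs).2]
        exact (hPQ s.1).2
      · have h1 := Finset.mem_Icc.mp (haM s)
        have h2 := Finset.mem_Icc.mp (haM t)
        rw [abs_le]
        push_cast
        constructor <;> linarith
  have hzero : (0 : ℤ) ∈ Finset.Icc (-M : ℤ) M := by
    rw [Finset.mem_Icc]
    omega
  have hpow : √x ≤ x ^ ((1 : ℝ) / 2 + δ) := by
    rw [Real.sqrt_eq_rpow]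
    exact Real.rpow_le_rpow_of_exponent_le (by linarith) (by linarith)
  calc _ ≤ _ := Finset.sum_le_sum hfiber
    _ = ((2 * M + 1 : ℕ) : ℝ) * (12 * R + Real.log Z) := by
        rw [Finset.sum_add_distrib, Finset.sum_const, hcard, nsmul_eq_mul,
          Finset.sum_ite_eq' _ _ _, if_pos hzero]
        ring
    _ ≤ (5 * (c * B)) * (13 * (D * (Real.log Z + x * Real.log x / Z))) := by
        have h1 : ((2 * M + 1 : ℕ) : ℝ) ≤ 5 * (c * B) := by
          push_cast
          linarith
        gcongr
        linarith
    _ = 65 * c * √e * D * √x * (Real.log Z + x * Real.log x / Z) := by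
        rw [hB]
        ring
    _ ≤ _ := by gcongr

end
end
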